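/- For every integer s ≥ 1 there exists a constant c > 0, depending only on s, with the following property: for every 2π-periodic function f : ℝ → ℂ of class C^{s+1}, every even integer N ≥ 2 (with h = 2π/N), and every grid index i ∈ {−N/2+1, …, N/2}, the pseudo-spectral derivative of the samples of f satisfies |(S_h f(α_·))(α_i) − f′(α_i)| ≤ c h^{s−1/2} ‖f‖_{s+1}. Moreover, for every filter function ρ the same estimate holds (with c also depending on ρ) with the filtered derivative D_h in place of S_h. -/

import Mathlib

open scoped BigOperators
open Finset

noncomputable section

/-- Grid spacing `h = 2π/N`. -/
def hgrid (N : ℤ) : ℝ := 2 * Real.pi / N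

/-- Grid points `α_j = j h`. -/
def gridPt (N : ℤ) (j : ℤ) : ℝ := j * hgrid N

/-- Index set `{-N/2+1, …, N/2}`. -/
def idxs (N : ℤ) : Finset ℤ := Finset.Icc (-(N / 2) + 1) (N / 2)

/-- Discrete Fourier coefficient `f̂_k`. -/
def dft (N : ℤ) (f : ℤ → ℂ) (k : ℤ) : ℂ :=
  (N : ℂ)⁻¹ * ∑ j ∈ idxs N, f j * Complex.exp (-(Complex.I * (k : ℂ) * (gridPt N j : ℂ)))

/-- Reconstruction of a discrete function from Fourier coefficients. -/
def idft (N : ℤ) (c : ℤ → ℂ) (j : ℤ) : ℂ :=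
  ∑ k ∈ idxs N, c k * Complex.exp (Complex.I * (k : ℂ) * (gridPt N j : ℂ))

/-- The pseudo-spectral derivative `S_h`. -/
def Sh (N : ℤ) (f : ℤ → ℂ) : ℤ → ℂ :=
  idft N fun k => if k = N / 2 then 0 else Complex.I * (k : ℂ) * dft N f k

/-- The pseudo-spectral antiderivative `S_h⁻¹`. -/
def Shinv (N : ℤ) (f : ℤ → ℂ) : ℤ → ℂ :=
  idft N fun k => if k = 0 then 0 else dft N f k / (Complex.I * (k : ℂ))

/-- The filtered discrete function `f^p`. -/
def filterP (N : ℤ) (ρ : ℝ → ℝ) (f : ℤ → ℂ) : ℤ → ℂ :=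
  idft N fun k => (ρ (gridPt N k) : ℂ) * dft N f k

/-- The filtered derivative `D_h`. -/
def Dh (N : ℤ) (ρ : ℝ → ℝ) (f : ℤ → ℂ) : ℤ → ℂ :=
  idft N fun k => Complex.I * (k : ℂ) * (ρ (gridPt N k) : ℂ) * dft N f k

/-- Discrete `l²` norm. -/
def l2norm (N : ℤ) (f : ℤ → ℂ) : ℝ :=
  Real.sqrt (hgrid N * ∑ j ∈ idxs N, ‖f j‖ ^ 2)

/-- Discrete Hilbert transform `H_h`. -/
def Hh (N : ℤ) (f : ℤ → ℂ) (i : ℤ) : ℂ :=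
  ((hgrid N / Real.pi : ℝ) : ℂ) *
    ∑ j ∈ (idxs N).filter (fun j => Odd (j - i)),
      f j * (Real.cot ((gridPt N i - gridPt N j) / 2) : ℂ)

/-- Discrete inner product `(f,g)_h`. -/
def dip (N : ℤ) (f g : ℤ → ℂ) : ℂ :=
  (hgrid N : ℂ) * ∑ j ∈ idxs N, (starRingEnd ℂ) (f j) * g j

/-- Discrete mean `⟨f⟩_h`. -/
def dmean (N : ℤ) (f : ℤ → ℂ) : ℂ :=
  (N : ℂ)⁻¹ * ∑ j ∈ idxs N, f j

/-- The discrete function of samples of a periodic function. -/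
def samples (N : ℤ) (f : ℝ → ℂ) : ℤ → ℂ := fun j => f (gridPt N j)

/-- Fourier coefficient of a `2π`-periodic function. -/
def fourierCoeffP (f : ℝ → ℂ) (k : ℤ) : ℂ :=
  ((2 * Real.pi)⁻¹ : ℝ) * ∫ α in (-Real.pi)..Real.pi, f α * Complex.exp (-(Complex.I * (k : ℂ) * (α : ℂ)))

/-- Sobolev norm `‖f‖_s`. -/
def sobolevNorm (s : ℕ) (f : ℝ → ℂ) : ℝ :=
  Real.sqrt (∑' k : ℤ, (1 + (k : ℝ) ^ 2) ^ s * ‖fourierCoeffP f k‖ ^ 2)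

/-- A filter (cutoff) function for numerical filtering. -/
structure IsFilter (ρ : ℝ → ℝ) : Prop where
  even : ∀ x, ρ (-x) = ρ x
  nonneg : ∀ x, 0 ≤ ρ x
  smooth : ∃ r : ℕ, 2 < r ∧ ContDiff ℝ r ρ
  zero_at_pi : ρ Real.pi = 0
  zero_at_neg_pi : ρ (-Real.pi) = 0
  deriv_zero_at_pi : deriv ρ Real.pi = 0
  deriv_zero_at_neg_pi : deriv ρ (-Real.pi) = 0
  one_near_zero : ∃ μ : ℝ, 0 < μ ∧ μ < 1 ∧ ∀ x : ℝ, |x| ≤ μ * Real.pi → ρ x = 1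

/-!
For `f = ∑ f̂_k e^{ikα}`, the samples of `e^{ikα}` on the grid coincide with those of the mode `l` of
`{-N/2+1, …, N/2}` congruent to `k` modulo `N`. Hence a discrete multiplier `σ` turns the samples of
`f` into those of `∑ σ(l) f̂_k e^{ikα}`, and its distance to `f' = ∑ ik f̂_k e^{ikα}` is at most
`∑ |σ(l) - ik| |f̂_k|`. The modes of the index set (`l = k`) contribute the error of the filter,
`|k| |ρ(kh) - 1| ≲ h^s |k|^{s+1}`; the others contribute the aliasing error, where
`|σ(l) - ik| ≲ |k|`. Cauchy–Schwarz against `|k|^{s+1} |f̂_k|` bounds the former by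
`h^s √N ‖f‖_{s+1}` and the latter by `(∑_{|k| ≥ N/2} |k|^{-2s})^{1/2} ‖f‖_{s+1}`, both of order
`h^{s-1/2}`. Since `S_h` is `D_h` for the filter which vanishes exactly at `π`, both operators are
covered.
-/

section LatticeSums

lemma sum_comp_natAbs_le {g : ℕ → ℝ} (hg : ∀ m, 0 ≤ g m) (t : Finset ℤ) :
    ∑ k ∈ t, g k.natAbs ≤ 2 * ∑ m ∈ t.image Int.natAbs, g m := by
  rw [Finset.sum_comp, Finset.mul_sum]
  refine Finset.sum_le_sum fun m _ => ?_
  have hfiber : #{k ∈ t | k.natAbs = m} ≤ 2 := by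
    refine (Finset.card_le_card (t := {(m : ℤ), -(m : ℤ)}) fun k hk => ?_).trans card_le_two
    have := (Finset.mem_filter.mp hk).2
    simp only [Finset.mem_insert, Finset.mem_singleton]
    omega
  rw [nsmul_eq_mul]
  gcongr
  · exact hg m
  · exact_mod_cast hfiber

lemma sum_nat_inv_sq_le {x : ℝ} (hx : 0 < x) {t : Finset ℕ} (ht : ∀ m ∈ t, x ≤ m) :
    ∑ m ∈ t, ((m : ℝ) ^ 2)⁻¹ ≤ 2 / x := by
  obtain ⟨n, hn⟩ : ∃ n, ⌈x⌉₊ = n + 1 :=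
    Nat.exists_eq_succ_of_ne_zero (Nat.ceil_pos.mpr hx).ne'
  have hsub : t ⊆ Finset.Ioo n (t.sup id + 1) := fun m hm => by
    have hnm : ⌈x⌉₊ ≤ m := Nat.ceil_le.mpr (ht m hm)
    exact Finset.mem_Ioo.mpr ⟨by omega, Nat.lt_succ_of_le (Finset.le_sup (f := id) hm)⟩
  have hxn : x ≤ (n : ℝ) + 1 := by exact_mod_cast hn ▸ Nat.le_ceil x
  calc ∑ m ∈ t, ((m : ℝ) ^ 2)⁻¹
      ≤ ∑ m ∈ Finset.Ioo n (t.sup id + 1), ((m : ℝ) ^ 2)⁻¹ :=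
        Finset.sum_le_sum_of_subset_of_nonneg hsub fun _ _ _ => by positivity
    _ ≤ 2 / ((n : ℝ) + 1) := sum_Ioo_inv_sq_le _ _
    _ ≤ 2 / x := by gcongr

lemma sum_int_inv_sq_le {x : ℝ} (hx : 0 < x) {t : Finset ℤ} (ht : ∀ k ∈ t, x ≤ |(k : ℝ)|) :
    ∑ k ∈ t, ((k : ℝ) ^ 2)⁻¹ ≤ 4 / x := by
  have himage : ∀ m ∈ t.image Int.natAbs, x ≤ m := fun m hm => by
    obtain ⟨k, hk, rfl⟩ := Finset.mem_image.mp hm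
    simpa only [Nat.cast_natAbs, Int.cast_abs] using ht k hk
  calc ∑ k ∈ t, ((k : ℝ) ^ 2)⁻¹
      = ∑ k ∈ t, ((k.natAbs : ℝ) ^ 2)⁻¹ := by
        simp only [Nat.cast_natAbs, Int.cast_abs, sq_abs]
    _ ≤ 2 * ∑ m ∈ t.image Int.natAbs, ((m : ℝ) ^ 2)⁻¹ :=
        sum_comp_natAbs_le (g := fun m => ((m : ℝ) ^ 2)⁻¹) (fun _ => by positivity) t
    _ ≤ 2 * (2 / x) := by
        gcongr
        exact sum_nat_inv_sq_le hx himage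
    _ = 4 / x := by ring

lemma sqrt_sum_int_inv_pow_le {s : ℕ} (hs : 1 ≤ s) {x : ℝ} (hx : 0 < x) {t : Finset ℤ}
    (ht : ∀ k ∈ t, x ≤ |(k : ℝ)|) :
    √(∑ k ∈ t, ((|(k : ℝ)| ^ s)⁻¹) ^ 2) ≤ 2 * x⁻¹ ^ ((s : ℝ) - 1 / 2) := by
  obtain ⟨m, rfl⟩ := Nat.exists_eq_add_of_le' hs
  have hexponent : (x⁻¹ ^ (((m + 1 : ℕ) : ℝ) - 1 / 2)) ^ 2 = x⁻¹ ^ (2 * m) * x⁻¹ := by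
    rw [← Real.rpow_natCast, ← Real.rpow_mul (by positivity), ← pow_succ, ← Real.rpow_natCast]
    congr 1
    push_cast
    ring
  rw [Real.sqrt_le_left (by positivity), mul_pow, hexponent]
  calc ∑ k ∈ t, ((|(k : ℝ)| ^ (m + 1))⁻¹) ^ 2
      = ∑ k ∈ t, |(k : ℝ)|⁻¹ ^ (2 * m) * ((k : ℝ) ^ 2)⁻¹ := by
        refine Finset.sum_congr rfl fun k _ => ?_
        rw [← sq_abs (k : ℝ), ← inv_pow, ← inv_pow]
        ring
    _ ≤ ∑ k ∈ t, x⁻¹ ^ (2 * m) * ((k : ℝ) ^ 2)⁻¹ := by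
        refine Finset.sum_le_sum fun k hk => ?_
        have := ht k hk
        gcongr
    _ ≤ x⁻¹ ^ (2 * m) * (4 / x) := by
        rw [← Finset.mul_sum]
        gcongr
        exact sum_int_inv_sq_le hx ht
    _ = 2 ^ 2 * (x⁻¹ ^ (2 * m) * x⁻¹) := by ring

end LatticeSums

section PseudospectralDerivative

open Complex Function

section FourierSeries

variable {f : ℝ → ℂ}

lemma periodic_deriv {E : Type*} [NormedAddCommGroup E] [NormedSpace ℝ E] {g : ℝ → E} {T : ℝ}
    (hg : Periodic g T) : Periodic (deriv g) T := fun x => by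
  rw [← deriv_comp_add_const, hg.funext]

lemma fourierCoeff_lift [Fact (0 < 2 * Real.pi)] (hf : Periodic f (2 * Real.pi)) (k : ℤ) :
    fourierCoeff hf.lift k = fourierCoeffP f k := by
  have hpi : (Real.pi : ℂ) ≠ 0 := by exact_mod_cast Real.pi_ne_zero
  rw [fourierCoeff_eq_intervalIntegral _ _ (-Real.pi), fourierCoeffP,
    show -Real.pi + 2 * Real.pi = Real.pi by ring, real_smul, one_div]
  congr 1
  refine intervalIntegral.integral_congr fun x _ => ?_
  simp only [Periodic.lift_coe, smul_eq_mul, fourier_coe_apply]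
  rw [mul_comm]
  congr 2
  push_cast
  field_simp

lemma summable_norm_sq_fourierCoeffP (hf : Periodic f (2 * Real.pi)) (hc : Continuous f) :
    Summable fun k => ‖fourierCoeffP f k‖ ^ 2 := by
  have : Fact (0 < 2 * Real.pi) := ⟨Real.two_pi_pos⟩
  let F : C(AddCircle (2 * Real.pi), ℂ) := ⟨hf.lift, continuous_coinduced_dom.mpr hc⟩
  have h := (hasSum_sq_fourierCoeff (ContinuousMap.toLp 2 AddCircle.haarAddCircle ℂ F)).summable
  simpa only [fourierCoeff_toLp, F, ContinuousMap.coe_mk, fourierCoeff_lift] using h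

lemma hasSum_fourierCoeffP (hf : Periodic f (2 * Real.pi)) (hc : Continuous f)
    (hs : Summable (fourierCoeffP f)) (x : ℝ) :
    HasSum (fun k : ℤ => fourierCoeffP f k * exp (I * k * x)) (f x) := by
  have : Fact (0 < 2 * Real.pi) := ⟨Real.two_pi_pos⟩
  have hpi : (Real.pi : ℂ) ≠ 0 := by exact_mod_cast Real.pi_ne_zero
  let F : C(AddCircle (2 * Real.pi), ℂ) := ⟨hf.lift, continuous_coinduced_dom.mpr hc⟩
  have hF : fourierCoeff F = fourierCoeffP f := funext (fourierCoeff_lift hf)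
  have h : HasSum _ (f x) :=
    has_pointwise_sum_fourier_series_of_summable (f := F) (hF ▸ hs) (x : AddCircle (2 * Real.pi))
  refine h.congr_fun fun k => ?_
  rw [hF, smul_eq_mul, fourier_coe_apply]
  congr 2
  push_cast
  field_simp

lemma hasDerivAt_exp_mul_ofReal (c : ℂ) (x : ℝ) :
    HasDerivAt (fun y : ℝ => exp (c * y)) (c * exp (c * x)) x := by
  simpa [mul_comm] using ((hasDerivAt_id (x : ℂ)).const_mul c).cexp.comp_ofReal

lemma fourierCoeffP_deriv (hf : Periodic f (2 * Real.pi)) (hc : ContDiff ℝ 1 f) (k : ℤ) :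
    fourierCoeffP (deriv f) k = I * k * fourierCoeffP f k := by
  have hparts := intervalIntegral.integral_mul_deriv_eq_deriv_mul
    (a := -Real.pi) (b := Real.pi) (fun x _ => hasDerivAt_exp_mul_ofReal (-(I * k)) x)
    (fun x _ => (hc.differentiable one_ne_zero x).hasDerivAt)
    (Continuous.intervalIntegrable (by fun_prop) _ _)
    ((hc.continuous_deriv le_rfl).intervalIntegrable _ _)
  have hf_ends : f Real.pi = f (-Real.pi) := by
    rw [← hf (-Real.pi)]
    congr 1
    ring
  have hexp_ends : exp (-(I * k) * (Real.pi : ℝ)) = exp (-(I * k) * ((-Real.pi : ℝ) : ℂ)) := by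
    rw [exp_eq_exp_iff_exists_int]
    exact ⟨-k, by push_cast; ring⟩
  rw [hf_ends, hexp_ends, sub_self, zero_sub] at hparts
  simp only [fourierCoeffP, ← neg_mul (I * (k : ℂ)), mul_comm (deriv f _)]
  rw [hparts, ← intervalIntegral.integral_neg, mul_left_comm,
    ← intervalIntegral.integral_const_mul (I * k)]
  congr 1
  refine intervalIntegral.integral_congr fun x _ => ?_
  ring

lemma summable_fourierCoeffP_of_summable_abs_mul
    (hs : Summable fun k : ℤ => |(k : ℝ)| * ‖fourierCoeffP f k‖) : Summable (fourierCoeffP f) := by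
  refine hs.of_norm_bounded_eventually ?_
  filter_upwards [(Set.finite_singleton (0 : ℤ)).compl_mem_cofinite] with k hk
  exact le_mul_of_one_le_left (norm_nonneg _) (by exact_mod_cast Int.one_le_abs hk)

lemma norm_exp_I_mul_intCast_mul_ofReal (k : ℤ) (x : ℝ) : ‖exp (I * k * x)‖ = 1 := by
  simpa [mul_assoc] using norm_exp_I_mul_ofReal (k * x)

lemma norm_fourierCoeffP_mul_deriv_exp (f : ℝ → ℂ) (k : ℤ) (x : ℝ) :
    ‖fourierCoeffP f k * (I * k * exp (I * k * x))‖ = |(k : ℝ)| * ‖fourierCoeffP f k‖ := by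
  rw [norm_mul, norm_mul, norm_mul, norm_exp_I_mul_intCast_mul_ofReal, norm_I, norm_intCast]
  ring

lemma summable_deriv_fourier_series
    (hs : Summable fun k : ℤ => |(k : ℝ)| * ‖fourierCoeffP f k‖) (x : ℝ) :
    Summable fun k : ℤ => fourierCoeffP f k * (I * k * exp (I * k * x)) :=
  .of_norm <| by simpa only [norm_fourierCoeffP_mul_deriv_exp] using hs

lemma hasDerivAt_of_summable_abs_mul (hf : Periodic f (2 * Real.pi)) (hc : Continuous f)
    (hs : Summable fun k : ℤ => |(k : ℝ)| * ‖fourierCoeffP f k‖) (x : ℝ) :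
    HasDerivAt f (∑' k : ℤ, fourierCoeffP f k * (I * k * exp (I * k * x))) x := by
  have hseries := hasSum_fourierCoeffP hf hc (summable_fourierCoeffP_of_summable_abs_mul hs)
  have hderiv := hasDerivAt_tsum (y₀ := x) hs
    (fun k y => (hasDerivAt_exp_mul_ofReal (I * k) y).const_mul (fourierCoeffP f k))
    (fun k y => (norm_fourierCoeffP_mul_deriv_exp f k y).le) (hseries x).summable x
  simpa only [(hseries _).tsum_eq] using hderiv

end FourierSeries

section Sobolev

/-- Membership of `f` in the periodic Sobolev space `H^n`: the series defining `sobolevNorm n f`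
converges. Without this condition `sobolevNorm n f` has the junk value `0`. -/
def HasFiniteSobolevNorm (n : ℕ) (f : ℝ → ℂ) : Prop :=
  Summable fun k : ℤ => (1 + (k : ℝ) ^ 2) ^ n * ‖fourierCoeffP f k‖ ^ 2

variable {f : ℝ → ℂ} {m n s : ℕ}

lemma HasFiniteSobolevNorm.mono (hf : HasFiniteSobolevNorm n f) (hmn : m ≤ n) :
    HasFiniteSobolevNorm m f := by
  refine Summable.of_nonneg_of_le (fun k => by positivity) (fun k => ?_) hf
  gcongr
  linarith [sq_nonneg (k : ℝ)]

lemma hasFiniteSobolevNorm_of_contDiff (hf : Periodic f (2 * Real.pi)) (hc : ContDiff ℝ n f) :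
    HasFiniteSobolevNorm n f := by
  induction n generalizing f with
  | zero => simpa [HasFiniteSobolevNorm] using summable_norm_sq_fourierCoeffP hf hc.continuous
  | succ n ih =>
    have hc' : ContDiff ℝ n (deriv f) := by
      rw [Nat.cast_succ, contDiff_succ_iff_deriv] at hc
      exact hc.2.2
    have hc1 : ContDiff ℝ 1 f := hc.of_le (by exact_mod_cast Nat.le_add_left 1 n)
    -- `(1 + k²)^(n+1) |f̂_k|² = (1 + k²)^n |f̂_k|² + (1 + k²)^n |k f̂_k|²`
    refine ((ih hf (hc.of_le (by exact_mod_cast n.le_succ))).add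
      (ih (periodic_deriv hf) hc')).congr fun k => ?_
    rw [fourierCoeffP_deriv hf hc1, norm_mul, norm_mul, norm_I, norm_intCast, one_mul, mul_pow,
      sq_abs]
    ring

lemma HasFiniteSobolevNorm.summable_abs_mul (hf : HasFiniteSobolevNorm n f) (hn : 2 ≤ n) :
    Summable fun k : ℤ => |(k : ℝ)| * ‖fourierCoeffP f k‖ := by
  refine Summable.of_nonneg_of_le (fun k => by positivity) (fun k => ?_)
    ((Real.summable_one_div_int_pow.mpr one_lt_two).add (hf.mono hn))
  rcases eq_or_ne k 0 with rfl | hk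
  · simp
  have : (k : ℝ) ≠ 0 := by exact_mod_cast hk
  calc |(k : ℝ)| * ‖fourierCoeffP f k‖
      = |(k : ℝ)|⁻¹ * (|(k : ℝ)| ^ 2 * ‖fourierCoeffP f k‖) := by field_simp
    _ ≤ |(k : ℝ)|⁻¹ ^ 2 + (|(k : ℝ)| ^ 2 * ‖fourierCoeffP f k‖) ^ 2 := by
        nlinarith [sq_nonneg (|(k : ℝ)|⁻¹ - |(k : ℝ)| ^ 2 * ‖fourierCoeffP f k‖),
          sq_nonneg (|(k : ℝ)|⁻¹ + |(k : ℝ)| ^ 2 * ‖fourierCoeffP f k‖)]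
    _ ≤ 1 / (k : ℝ) ^ 2 + (1 + (k : ℝ) ^ 2) ^ 2 * ‖fourierCoeffP f k‖ ^ 2 := by
        rw [inv_pow, sq_abs, one_div, mul_pow]
        gcongr
        linarith

lemma HasFiniteSobolevNorm.sum_mul_le (hf : HasFiniteSobolevNorm n f) (t : Finset ℤ)
    (a : ℤ → ℝ) :
    ∑ k ∈ t, a k * (|(k : ℝ)| ^ n * ‖fourierCoeffP f k‖) ≤
      √(∑ k ∈ t, a k ^ 2) * sobolevNorm n f := by
  refine (Real.sum_mul_le_sqrt_mul_sqrt _ _ _).trans ?_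
  have hterm : ∀ k ∈ t, (|(k : ℝ)| ^ n * ‖fourierCoeffP f k‖) ^ 2 ≤
      (1 + (k : ℝ) ^ 2) ^ n * ‖fourierCoeffP f k‖ ^ 2 := fun k _ => by
    rw [mul_pow, pow_right_comm, sq_abs]
    gcongr
    linarith
  rw [sobolevNorm]
  gcongr
  exact (Finset.sum_le_sum hterm).trans (Summable.sum_le_tsum t (fun k _ => by positivity) hf)

lemma HasFiniteSobolevNorm.sum_abs_pow_mul_le (hf : HasFiniteSobolevNorm n f) (t : Finset ℤ) :
    ∑ k ∈ t, |(k : ℝ)| ^ n * ‖fourierCoeffP f k‖ ≤ √(#t) * sobolevNorm n f := by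
  simpa using hf.sum_mul_le t fun _ => 1

lemma HasFiniteSobolevNorm.sum_abs_mul_le (hs : 1 ≤ s) (hf : HasFiniteSobolevNorm (s + 1) f)
    {x : ℝ} (hx : 0 < x) {t : Finset ℤ} (ht : ∀ k ∈ t, x ≤ |(k : ℝ)|) :
    ∑ k ∈ t, |(k : ℝ)| * ‖fourierCoeffP f k‖ ≤
      2 * x⁻¹ ^ ((s : ℝ) - 1 / 2) * sobolevNorm (s + 1) f :=
  calc ∑ k ∈ t, |(k : ℝ)| * ‖fourierCoeffP f k‖
      = ∑ k ∈ t, (|(k : ℝ)| ^ s)⁻¹ * (|(k : ℝ)| ^ (s + 1) * ‖fourierCoeffP f k‖) := by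
        refine Finset.sum_congr rfl fun k hk => ?_
        have := (hx.trans_le (ht k hk)).ne'
        field_simp
        ring
    _ ≤ √(∑ k ∈ t, ((|(k : ℝ)| ^ s)⁻¹) ^ 2) * sobolevNorm (s + 1) f := hf.sum_mul_le t _
    _ ≤ 2 * x⁻¹ ^ ((s : ℝ) - 1 / 2) * sobolevNorm (s + 1) f := by
        gcongr
        · exact Real.sqrt_nonneg _
        · exact sqrt_sum_int_inv_pow_le hs hx ht

end Sobolev

section Grid

variable {N : ℤ}

lemma intCast_mul_hgrid (hN : N ≠ 0) : (N : ℂ) * hgrid N = 2 * Real.pi := by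
  have : (N : ℂ) ≠ 0 := by exact_mod_cast hN
  rw [hgrid]
  push_cast
  field_simp

lemma sum_idxs (hE : Even N) (g : ℤ → ℂ) :
    ∑ j ∈ idxs N, g j = ∑ n ∈ range N.toNat, g (-(N / 2) + 1 + n) := by
  have hlength : N / 2 + 1 - (-(N / 2) + 1) = N := by
    obtain ⟨M, rfl⟩ := hE
    omega
  rw [idxs, Int.Icc_eq_finset_map, hlength, Finset.sum_map]
  rfl

lemma card_idxs (hE : Even N) : #(idxs N) = N.toNat := by
  obtain ⟨M, rfl⟩ := hE
  rw [idxs, Int.card_Icc]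
  congr 1
  omega

lemma abs_le_half_of_mem_idxs {k : ℤ} (hE : Even N) (hk : k ∈ idxs N) : |(k : ℝ)| ≤ N / 2 := by
  obtain ⟨M, rfl⟩ := hE
  rw [idxs, Finset.mem_Icc] at hk
  have h : |(k : ℝ)| ≤ M := by exact_mod_cast abs_le.mpr ⟨by omega, by omega⟩
  push_cast
  linarith

lemma half_le_abs_of_notMem_idxs {k : ℤ} (hE : Even N) (hk : k ∉ idxs N) :
    (N : ℝ) / 2 ≤ |(k : ℝ)| := by
  obtain ⟨M, rfl⟩ := hE
  rw [idxs, Finset.mem_Icc] at hk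
  have h : (M : ℝ) ≤ |(k : ℝ)| := by exact_mod_cast le_abs'.mpr (by omega)
  push_cast
  linarith

lemma eq_of_modEq_of_mem_idxs {k l : ℤ} (hE : Even N) (hk : k ∈ idxs N) (hl : l ∈ idxs N)
    (h : k ≡ l [ZMOD N]) : k = l := by
  obtain ⟨M, rfl⟩ := hE
  rw [idxs, Finset.mem_Icc] at hk hl
  have := Int.eq_zero_of_abs_lt_dvd h.dvd (by rw [abs_lt]; omega)
  omega

/-- The aliased frequency: the representative in `idxs N` of the class of `k` modulo `N`. The shift
by `N / 2 - 1` moves `idxs N` to the range `{0, …, N - 1}` of `%`. -/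
def aliasFreq (N k : ℤ) : ℤ := (k + (N / 2 - 1)) % N - (N / 2 - 1)

lemma aliasFreq_mem_idxs (hN : 0 < N) (hE : Even N) (k : ℤ) : aliasFreq N k ∈ idxs N := by
  have hnonneg := Int.emod_nonneg (k + (N / 2 - 1)) hN.ne'
  have hlt := Int.emod_lt_of_pos (k + (N / 2 - 1)) hN
  obtain ⟨M, rfl⟩ := hE
  rw [idxs, Finset.mem_Icc, aliasFreq]
  omega

lemma aliasFreq_modEq (N k : ℤ) : aliasFreq N k ≡ k [ZMOD N] := by
  simpa [aliasFreq] using (Int.mod_modEq (k + (N / 2 - 1)) N).sub_right (N / 2 - 1)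

lemma aliasFreq_of_mem_idxs {k : ℤ} (hN : 0 < N) (hE : Even N) (hk : k ∈ idxs N) :
    aliasFreq N k = k :=
  eq_of_modEq_of_mem_idxs hE (aliasFreq_mem_idxs hN hE k) hk (aliasFreq_modEq N k)

lemma exp_gridPt_eq_of_modEq {k l : ℤ} (hN : N ≠ 0) (h : k ≡ l [ZMOD N]) (j : ℤ) :
    exp (I * k * gridPt N j) = exp (I * l * gridPt N j) := by
  obtain ⟨m, hm⟩ := h.symm.dvd
  obtain rfl : k = l + N * m := by omega
  rw [exp_eq_exp_iff_exists_int]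
  refine ⟨m * j, ?_⟩
  rw [gridPt]
  push_cast
  linear_combination I * m * j * intCast_mul_hgrid hN

lemma exp_hgrid_eq_one_iff {m : ℤ} (hN : N ≠ 0) : exp (I * m * hgrid N) = 1 ↔ N ∣ m := by
  rw [exp_eq_one_iff]
  refine exists_congr fun n => ⟨fun h => ?_, fun h => ?_⟩
  · have hscaled : 2 * Real.pi * I * m = 2 * Real.pi * I * (N * n : ℤ) := by
      push_cast
      linear_combination (N : ℂ) * h - I * m * intCast_mul_hgrid hN
    exact_mod_cast mul_left_cancel₀ two_pi_I_ne_zero hscaled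
  · rw [h]
    push_cast
    linear_combination I * n * intCast_mul_hgrid hN

lemma sum_exp_gridPt_eq_zero {m : ℤ} (hN : 0 < N) (hE : Even N) (hm : ¬ N ∣ m) :
    ∑ j ∈ idxs N, exp (I * m * gridPt N j) = 0 := by
  have hgeom : ∀ n : ℕ, exp (I * m * gridPt N (-(N / 2) + 1 + n)) =
      exp (I * m * gridPt N (-(N / 2) + 1)) * exp (I * m * hgrid N) ^ n := fun n => by
    rw [← exp_nat_mul, ← exp_add]
    simp only [gridPt]
    push_cast
    ring_nf
  have hroot : exp (I * m * hgrid N) ^ N.toNat = 1 := by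
    have hcast : (N.toNat : ℂ) = N := by exact_mod_cast Int.toNat_of_nonneg hN.le
    rw [← exp_nat_mul, hcast, exp_eq_one_iff]
    exact ⟨m, by linear_combination I * m * intCast_mul_hgrid hN.ne'⟩
  rw [sum_idxs hE]
  simp only [hgeom]
  rw [← Finset.mul_sum, geom_sum_eq ((exp_hgrid_eq_one_iff hN.ne').not.mpr hm), hroot, sub_self,
    zero_div, mul_zero]

lemma dft_exp (hN : 0 < N) (hE : Even N) (k l : ℤ) :
    dft N (fun j => exp (I * k * gridPt N j)) l = if l ≡ k [ZMOD N] then 1 else 0 := by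
  have hmul : ∀ j : ℤ, exp (I * k * gridPt N j) * exp (-(I * l * gridPt N j)) =
      exp (I * (k - l : ℤ) * gridPt N j) := fun j => by
    rw [← exp_add]
    push_cast
    ring_nf
  simp only [dft, hmul]
  split_ifs with h
  · have hone : ∀ j : ℤ, exp (I * (k - l : ℤ) * gridPt N j) = 1 := fun j => by
      rw [exp_gridPt_eq_of_modEq hN.ne' (Int.modEq_zero_iff_dvd.mpr h.dvd)]
      simp
    have hNC : (N : ℂ) ≠ 0 := by exact_mod_cast hN.ne'
    have hcast : (N.toNat : ℂ) = N := by exact_mod_cast Int.toNat_of_nonneg hN.le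
    simp only [hone, Finset.sum_const, nsmul_eq_mul, mul_one, card_idxs hE, hcast]
    exact inv_mul_cancel₀ hNC
  · rw [sum_exp_gridPt_eq_zero hN hE fun hd => h (Int.modEq_iff_dvd.mpr hd), mul_zero]

end Grid

section GridMultiplier

variable {N : ℤ}

/-- The discrete Fourier multiplier with symbol `σ`: the operator on discrete functions which
multiplies the coefficient at each frequency `k ∈ idxs N` by `σ k`. -/
def gridMultiplier (N : ℤ) (σ : ℤ → ℂ) (v : ℤ → ℂ) : ℤ → ℂ :=
  idft N fun k => σ k * dft N v k

lemma gridMultiplier_const_mul (σ : ℤ → ℂ) (a : ℂ) (v : ℤ → ℂ) (i : ℤ) :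
    gridMultiplier N σ (fun j => a * v j) i = a * gridMultiplier N σ v i := by
  have hdft : ∀ k, dft N (fun j => a * v j) k = a * dft N v k := fun k => by
    simp only [dft, mul_assoc, ← Finset.mul_sum]
    ring
  simp only [gridMultiplier, idft, hdft, Finset.mul_sum]
  exact Finset.sum_congr rfl fun k _ => by ring

lemma hasSum_gridMultiplier {ι : Type*} {g : ι → ℤ → ℂ} {v : ℤ → ℂ}
    (hg : ∀ j, HasSum (fun k => g k j) (v j)) (σ : ℤ → ℂ) (i : ℤ) :
    HasSum (fun k => gridMultiplier N σ (g k) i) (gridMultiplier N σ v i) := by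
  have hdft : ∀ l, HasSum (fun k => dft N (g k) l) (dft N v l) := fun l => by
    simp only [dft]
    exact (hasSum_sum fun j _ => (hg j).mul_right _).mul_left _
  simp only [gridMultiplier, idft]
  exact hasSum_sum fun l _ => ((hdft l).mul_left (σ l)).mul_right _

lemma gridMultiplier_exp (hN : 0 < N) (hE : Even N) (σ : ℤ → ℂ) (k i : ℤ) :
    gridMultiplier N σ (fun j => exp (I * k * gridPt N j)) i =
      σ (aliasFreq N k) * exp (I * k * gridPt N i) := by
  have hmem := aliasFreq_mem_idxs hN hE k
  have hmod := aliasFreq_modEq N k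
  simp only [gridMultiplier, idft, dft_exp hN hE]
  rw [Finset.sum_eq_single_of_mem _ hmem fun l hl hne => by
      rw [if_neg fun h => hne (eq_of_modEq_of_mem_idxs hE hl hmem (h.trans hmod.symm)), mul_zero,
        zero_mul],
    if_pos hmod, mul_one, exp_gridPt_eq_of_modEq hN.ne' hmod]

lemma hasSum_gridMultiplier_samples (hN : 0 < N) (hE : Even N) {f : ℝ → ℂ}
    (hf : Periodic f (2 * Real.pi)) (hc : Continuous f) (hs : Summable (fourierCoeffP f))
    (σ : ℤ → ℂ) (i : ℤ) :
    HasSum (fun k : ℤ => fourierCoeffP f k * (σ (aliasFreq N k) * exp (I * k * gridPt N i)))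
      (gridMultiplier N σ (samples N f) i) := by
  have h := hasSum_gridMultiplier (N := N) (v := samples N f)
    (fun j => hasSum_fourierCoeffP hf hc hs (gridPt N j)) σ i
  simpa only [gridMultiplier_const_mul, gridMultiplier_exp hN hE] using h

end GridMultiplier

section Accuracy

variable {n s : ℕ} {f : ℝ → ℂ} {N : ℤ}

lemma hasSum_gridMultiplier_sub_deriv (hN : 0 < N) (hE : Even N) (hf : Periodic f (2 * Real.pi))
    (hc : Continuous f) (hs : Summable fun k : ℤ => |(k : ℝ)| * ‖fourierCoeffP f k‖)
    (σ : ℤ → ℂ) (i : ℤ) :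
    HasSum (fun k : ℤ => fourierCoeffP f k * ((σ (aliasFreq N k) - I * k) *
        exp (I * k * gridPt N i)))
      (gridMultiplier N σ (samples N f) i - deriv f (gridPt N i)) := by
  have hmultiplier := hasSum_gridMultiplier_samples hN hE hf hc
    (summable_fourierCoeffP_of_summable_abs_mul hs) σ i
  have hderiv := (summable_deriv_fourier_series hs (gridPt N i)).hasSum
  rw [← (hasDerivAt_of_summable_abs_mul hf hc hs (gridPt N i)).deriv] at hderiv
  simpa only [sub_mul, mul_sub] using hmultiplier.sub hderiv

lemma HasFiniteSobolevNorm.sum_resolved_le (hfs : HasFiniteSobolevNorm n f) (hN : 0 ≤ N)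
    (hE : Even N) {e : ℤ → ℝ} {A : ℝ} (hA : 0 ≤ A) (he : ∀ k ∈ idxs N, e k ≤ A * |(k : ℝ)| ^ n)
    {t : Finset ℤ} (ht : t ⊆ idxs N) :
    ∑ k ∈ t, e k * ‖fourierCoeffP f k‖ ≤ A * √N * sobolevNorm n f := by
  have hcard : (#t : ℝ) ≤ N := by
    have := card_idxs hE ▸ Finset.card_le_card ht
    exact_mod_cast (by omega : (#t : ℤ) ≤ N)
  calc ∑ k ∈ t, e k * ‖fourierCoeffP f k‖
      ≤ ∑ k ∈ t, A * (|(k : ℝ)| ^ n * ‖fourierCoeffP f k‖) := by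
        refine Finset.sum_le_sum fun k hk => ?_
        rw [← mul_assoc]
        gcongr
        exact he k (ht hk)
    _ ≤ A * (√(#t) * sobolevNorm n f) := by
        rw [← Finset.mul_sum]
        gcongr
        exact hfs.sum_abs_pow_mul_le t
    _ ≤ A * (√N * sobolevNorm n f) := by
        gcongr
        exact Real.sqrt_nonneg _
    _ = A * √N * sobolevNorm n f := by ring

lemma HasFiniteSobolevNorm.sum_aliased_le (hs : 1 ≤ s) (hfs : HasFiniteSobolevNorm (s + 1) f)
    (hN : 0 < N) (hE : Even N) {e : ℤ → ℝ} {B : ℝ} (hB : 0 ≤ B)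
    (he : ∀ k ∉ idxs N, e k ≤ B * |(k : ℝ)|) {t : Finset ℤ} (ht : ∀ k ∈ t, k ∉ idxs N) :
    ∑ k ∈ t, e k * ‖fourierCoeffP f k‖ ≤
      B * (2 * ((N : ℝ) / 2)⁻¹ ^ ((s : ℝ) - 1 / 2)) * sobolevNorm (s + 1) f := by
  have hN2 : 0 < (N : ℝ) / 2 := by positivity
  calc ∑ k ∈ t, e k * ‖fourierCoeffP f k‖
      ≤ ∑ k ∈ t, B * (|(k : ℝ)| * ‖fourierCoeffP f k‖) := by
        refine Finset.sum_le_sum fun k hk => ?_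
        rw [← mul_assoc]
        gcongr
        exact he k (ht k hk)
    _ ≤ B * (2 * ((N : ℝ) / 2)⁻¹ ^ ((s : ℝ) - 1 / 2) * sobolevNorm (s + 1) f) := by
        rw [← Finset.mul_sum]
        gcongr
        exact hfs.sum_abs_mul_le hs hN2 fun k hk => half_le_abs_of_notMem_idxs hE (ht k hk)
    _ = B * (2 * ((N : ℝ) / 2)⁻¹ ^ ((s : ℝ) - 1 / 2)) * sobolevNorm (s + 1) f := by ring

lemma norm_aliased_symbol_sub_le (hN : 0 < N) (hE : Even N) {σ : ℤ → ℂ} {B : ℝ} (hB : 0 ≤ B)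
    (hσ : ∀ k ∈ idxs N, ‖σ k‖ ≤ B * (N / 2)) {k : ℤ} (hk : k ∉ idxs N) :
    ‖σ (aliasFreq N k) - I * k‖ ≤ (B + 1) * |(k : ℝ)| :=
  calc ‖σ (aliasFreq N k) - I * k‖
      ≤ ‖σ (aliasFreq N k)‖ + ‖I * (k : ℂ)‖ := norm_sub_le _ _
    _ ≤ B * |(k : ℝ)| + |(k : ℝ)| := by
        gcongr
        · refine (hσ _ (aliasFreq_mem_idxs hN hE k)).trans ?_
          gcongr
          exact half_le_abs_of_notMem_idxs hE hk
        · simp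
    _ = (B + 1) * |(k : ℝ)| := by ring

lemma norm_gridMultiplier_sub_deriv_le (hs : 1 ≤ s) (hf : Periodic f (2 * Real.pi))
    (hc : Continuous f) (hfs : HasFiniteSobolevNorm (s + 1) f) (hN : 0 < N) (hE : Even N)
    {σ : ℤ → ℂ} {A B : ℝ} (hA : 0 ≤ A) (hB : 0 ≤ B)
    (hσ_sub : ∀ k ∈ idxs N, ‖σ k - I * k‖ ≤ A * |(k : ℝ)| ^ (s + 1))
    (hσ : ∀ k ∈ idxs N, ‖σ k‖ ≤ B * (N / 2)) (i : ℤ) :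
    ‖gridMultiplier N σ (samples N f) i - deriv f (gridPt N i)‖ ≤
      (A * √N + (B + 1) * (2 * ((N : ℝ) / 2)⁻¹ ^ ((s : ℝ) - 1 / 2))) * sobolevNorm (s + 1) f := by
  have hresolved : ∀ k ∈ idxs N, ‖σ (aliasFreq N k) - I * k‖ ≤ A * |(k : ℝ)| ^ (s + 1) :=
    fun k hk => (aliasFreq_of_mem_idxs hN hE hk).symm ▸ hσ_sub k hk
  have hseries := hasSum_gridMultiplier_sub_deriv hN hE hf hc
    (hfs.summable_abs_mul (by omega)) σ i
  refine le_of_tendsto hseries.norm (.of_forall fun t => ?_)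
  calc ‖∑ k ∈ t, fourierCoeffP f k * ((σ (aliasFreq N k) - I * k) * exp (I * k * gridPt N i))‖
      ≤ ∑ k ∈ t, ‖σ (aliasFreq N k) - I * k‖ * ‖fourierCoeffP f k‖ := by
        refine (norm_sum_le _ _).trans_eq (Finset.sum_congr rfl fun k _ => ?_)
        rw [norm_mul, norm_mul, norm_exp_I_mul_intCast_mul_ofReal, mul_one, mul_comm]
    _ = ∑ k ∈ t with k ∈ idxs N, ‖σ (aliasFreq N k) - I * k‖ * ‖fourierCoeffP f k‖ +
        ∑ k ∈ t with k ∉ idxs N, ‖σ (aliasFreq N k) - I * k‖ * ‖fourierCoeffP f k‖ :=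
        (Finset.sum_filter_add_sum_filter_not _ _ _).symm
    _ ≤ A * √N * sobolevNorm (s + 1) f +
        (B + 1) * (2 * ((N : ℝ) / 2)⁻¹ ^ ((s : ℝ) - 1 / 2)) * sobolevNorm (s + 1) f :=
        add_le_add
          (hfs.sum_resolved_le hN.le hE hA hresolved fun k hk => (Finset.mem_filter.mp hk).2)
          (hfs.sum_aliased_le hs hN hE (by positivity)
            (fun k hk => norm_aliased_symbol_sub_le hN hE hB hσ hk)
            fun k hk => (Finset.mem_filter.mp hk).2)
    _ = _ := (add_mul _ _ _).symm

end Accuracy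

section FilteredDerivative

variable {N : ℤ} {s : ℕ}

lemma hgrid_pos (hN : 0 < N) : 0 < hgrid N := by
  rw [hgrid]
  positivity

lemma half_mul_hgrid (hN : N ≠ 0) : (N : ℝ) / 2 * hgrid N = Real.pi := by
  have : (N : ℝ) ≠ 0 := by exact_mod_cast hN
  rw [hgrid]
  field_simp

lemma hgrid_pow_mul_sqrt (hN : 0 < N) (s : ℕ) :
    hgrid N ^ s * √N = √(2 * Real.pi) * hgrid N ^ ((s : ℝ) - 1 / 2) := by
  have hh := hgrid_pos hN
  have hprod : √(hgrid N) * √N = √(2 * Real.pi) := by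
    rw [← Real.sqrt_mul hh.le]
    congr 1
    linarith [half_mul_hgrid hN.ne']
  rw [Real.rpow_sub hh, Real.rpow_natCast, ← Real.sqrt_eq_rpow, ← hprod]
  field_simp

lemma inv_half_rpow_le_hgrid_rpow (hN : 0 < N) {p : ℝ} (hp : 0 ≤ p) :
    ((N : ℝ) / 2)⁻¹ ^ p ≤ hgrid N ^ p := by
  have hN2 : 0 < (N : ℝ) / 2 := by positivity
  have hle : ((N : ℝ) / 2)⁻¹ ≤ hgrid N := by
    rw [inv_le_iff_one_le_mul₀' hN2, half_mul_hgrid hN.ne']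
    linarith [Real.pi_gt_three]
  gcongr

lemma abs_gridPt (hN : 0 < N) (k : ℤ) : |gridPt N k| = |(k : ℝ)| * hgrid N := by
  rw [gridPt, abs_mul, abs_of_pos (hgrid_pos hN)]

lemma abs_gridPt_le_pi {k : ℤ} (hN : 0 < N) (hE : Even N) (hk : k ∈ idxs N) :
    |gridPt N k| ≤ Real.pi := by
  rw [abs_gridPt hN, ← half_mul_hgrid hN.ne']
  gcongr
  · exact (hgrid_pos hN).le
  · exact abs_le_half_of_mem_idxs hE hk

/-- `ρ` approximates `1` to order `s` at the origin, uniformly on the band `|x| ≤ π` of resolved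
frequencies `x = kh`, with constant `C`. -/
def IsFilterOfOrder (s : ℕ) (C : ℝ) (ρ : ℝ → ℝ) : Prop :=
  ∀ x, |x| ≤ Real.pi → |ρ x - 1| ≤ C * |x| ^ s

variable {C : ℝ} {ρ : ℝ → ℝ}

lemma IsFilterOfOrder.nonneg (hρ : IsFilterOfOrder s C ρ) : 0 ≤ C := by
  have h := (abs_nonneg _).trans (hρ Real.pi (abs_of_pos Real.pi_pos).le)
  exact nonneg_of_mul_nonneg_left h (by positivity)

lemma IsFilterOfOrder.norm_symbol_sub_le (hρ : IsFilterOfOrder s C ρ) (hN : 0 < N) (hE : Even N)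
    {k : ℤ} (hk : k ∈ idxs N) :
    ‖I * k * (ρ (gridPt N k) : ℂ) - I * k‖ ≤ C * hgrid N ^ s * |(k : ℝ)| ^ (s + 1) :=
  calc ‖I * k * (ρ (gridPt N k) : ℂ) - I * k‖
      = |(k : ℝ)| * |ρ (gridPt N k) - 1| := by
        rw [← mul_sub_one, norm_mul, norm_mul, norm_I, norm_intCast, one_mul,
          ← ofReal_one, ← ofReal_sub, norm_real, Real.norm_eq_abs]
    _ ≤ |(k : ℝ)| * (C * |gridPt N k| ^ s) := by
        gcongr
        exact hρ _ (abs_gridPt_le_pi hN hE hk)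
    _ = C * hgrid N ^ s * |(k : ℝ)| ^ (s + 1) := by
        rw [abs_gridPt hN]
        ring

lemma IsFilterOfOrder.norm_symbol_le (hρ : IsFilterOfOrder s C ρ) (hN : 0 < N) (hE : Even N)
    {k : ℤ} (hk : k ∈ idxs N) :
    ‖I * k * (ρ (gridPt N k) : ℂ)‖ ≤ (1 + C * Real.pi ^ s) * (N / 2) := by
  have hgrid_le := abs_gridPt_le_pi hN hE hk
  have hC := hρ.nonneg
  have hbound : |ρ (gridPt N k)| ≤ 1 + C * Real.pi ^ s :=
    calc |ρ (gridPt N k)| = |1 + (ρ (gridPt N k) - 1)| := by ring_nf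
      _ ≤ |1| + |ρ (gridPt N k) - 1| := abs_add_le _ _
      _ ≤ 1 + C * |gridPt N k| ^ s := by
          rw [abs_one]
          gcongr
          exact hρ _ hgrid_le
      _ ≤ 1 + C * Real.pi ^ s := by gcongr
  rw [norm_mul, norm_mul, norm_I, norm_intCast, one_mul, norm_real, Real.norm_eq_abs, mul_comm]
  gcongr
  exact abs_le_half_of_mem_idxs hE hk

theorem pseudospectral_derivative_accuracy_general (s : ℕ) (hs : 1 ≤ s) {C : ℝ} {ρ : ℝ → ℝ}
    (hρ : IsFilterOfOrder s C ρ) :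
    ∃ c : ℝ, 0 < c ∧ ∀ f : ℝ → ℂ, Periodic f (2 * Real.pi) → Continuous f →
      HasFiniteSobolevNorm (s + 1) f → Differentiable ℝ f ∧
        ∀ N : ℤ, 2 ≤ N → Even N → ∀ i : ℤ,
          ‖Dh N ρ (samples N f) i - deriv f (gridPt N i)‖ ≤
            c * hgrid N ^ ((s : ℝ) - 1 / 2) * sobolevNorm (s + 1) f := by
  have hC := hρ.nonneg
  refine ⟨C * √(2 * Real.pi) + (1 + C * Real.pi ^ s + 1) * 2, by positivity,
    fun f hf hc hfs => ⟨fun x => (hasDerivAt_of_summable_abs_mul hf hc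
      (hfs.summable_abs_mul (by omega)) x).differentiableAt, fun N hN hE i => ?_⟩⟩
  have hN0 : 0 < N := by omega
  have hp : 0 ≤ (s : ℝ) - 1 / 2 := by
    have : (1 : ℝ) ≤ s := by exact_mod_cast hs
    linarith
  have hh := hgrid_pos hN0
  refine (norm_gridMultiplier_sub_deriv_le hs hf hc hfs hN0 hE (by positivity) (by positivity)
    (fun k hk => hρ.norm_symbol_sub_le hN0 hE hk) (fun k hk => hρ.norm_symbol_le hN0 hE hk)
    i).trans ?_
  have hsobolev : 0 ≤ sobolevNorm (s + 1) f := Real.sqrt_nonneg _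
  gcongr
  calc C * hgrid N ^ s * √N +
        (1 + C * Real.pi ^ s + 1) * (2 * ((N : ℝ) / 2)⁻¹ ^ ((s : ℝ) - 1 / 2))
      ≤ C * (√(2 * Real.pi) * hgrid N ^ ((s : ℝ) - 1 / 2)) +
        (1 + C * Real.pi ^ s + 1) * (2 * hgrid N ^ ((s : ℝ) - 1 / 2)) := by
        rw [mul_assoc, hgrid_pow_mul_sqrt hN0]
        gcongr _ + _ * (2 * ?_)
        exact inv_half_rpow_le_hgrid_rpow hN0 hp
    _ = (C * √(2 * Real.pi) + (1 + C * Real.pi ^ s + 1) * 2) * hgrid N ^ ((s : ℝ) - 1 / 2) := by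
        ring

end FilteredDerivative

section Filters

lemma exists_norm_le_mul_norm_pow {E F : Type*} [NormedAddCommGroup E] [ProperSpace E]
    [NormedAddCommGroup F] {g : E → F} (hg : Continuous g) {r : ℝ} (hr : 0 < r)
    (hzero : ∀ x, ‖x‖ ≤ r → g x = 0) (R : ℝ) (n : ℕ) :
    ∃ C, ∀ x, ‖x‖ ≤ R → ‖g x‖ ≤ C * ‖x‖ ^ n := by
  obtain ⟨A, hA⟩ := (isCompact_closedBall (0 : E) R).exists_bound_of_continuousOn hg.continuousOn
  refine ⟨max A 0 / r ^ n, fun x hx => ?_⟩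
  rcases le_total ‖x‖ r with hxr | hxr
  · rw [hzero x hxr, norm_zero]
    positivity
  calc ‖g x‖ ≤ max A 0 := le_max_of_le_left (hA x (by simpa using hx))
    _ = max A 0 / r ^ n * r ^ n := by field_simp
    _ ≤ max A 0 / r ^ n * ‖x‖ ^ n := by gcongr

lemma IsFilter.exists_isFilterOfOrder {ρ : ℝ → ℝ} (hρ : IsFilter ρ) (s : ℕ) :
    ∃ C, IsFilterOfOrder s C ρ := by
  obtain ⟨μ, hμ, -, hone⟩ := hρ.one_near_zero
  obtain ⟨r, -, hsmooth⟩ := hρ.smooth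
  exact exists_norm_le_mul_norm_pow (g := fun x => ρ x - 1)
    (hsmooth.continuous.sub continuous_const) (mul_pos hμ Real.pi_pos)
    (fun x hx => sub_eq_zero.mpr (hone x hx)) Real.pi s

/-- The sharp cutoff: of the resolved frequencies it removes only `k = N / 2`, for which
`kh = π`. -/
def sharpCutoff (x : ℝ) : ℝ := if x = Real.pi then 0 else 1

lemma isFilterOfOrder_sharpCutoff (s : ℕ) :
    IsFilterOfOrder s (Real.pi ^ s)⁻¹ sharpCutoff := fun x _ => by
  rcases eq_or_ne x Real.pi with rfl | hx
  · have : Real.pi ^ s ≠ 0 := by positivity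
    simp [sharpCutoff, abs_of_pos Real.pi_pos, this]
  · simp only [sharpCutoff, if_neg hx, sub_self, abs_zero]
    positivity

lemma gridPt_eq_pi_iff {N k : ℤ} (hN : 0 < N) (hE : Even N) :
    gridPt N k = Real.pi ↔ k = N / 2 := by
  have hcast : ((N / 2 : ℤ) : ℝ) = N / 2 := by
    rw [Int.cast_div hE.two_dvd (by norm_num)]
    norm_num
  rw [gridPt, ← half_mul_hgrid hN.ne', mul_left_inj' (hgrid_pos hN).ne', ← hcast, Int.cast_inj]

lemma Sh_eq_Dh_sharpCutoff {N : ℤ} (hN : 0 < N) (hE : Even N) (v : ℤ → ℂ) :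
    Sh N v = Dh N sharpCutoff v := by
  have hsymbol : ∀ k : ℤ, (if k = N / 2 then 0 else I * k * dft N v k) =
      I * k * (sharpCutoff (gridPt N k) : ℂ) * dft N v k := fun k => by
    simp only [sharpCutoff, gridPt_eq_pi_iff hN hE]
    split_ifs <;> simp
  simp only [Sh, Dh, hsymbol]

end Filters

end PseudospectralDerivative

/-- Lemma 5.1: spectral accuracy of the pseudo-spectral derivative `S_h`
and of the filtered derivative `D_h`. -/
theorem pseudospectral_derivative_accuracy (s : ℕ) (hs : 1 ≤ s) :
    (∃ c : ℝ, 0 < c ∧ ∀ f : ℝ → ℂ, Function.Periodic f (2 * Real.pi) →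
      ContDiff ℝ (s + 1 : ℕ) f →
      ∀ N : ℤ, 2 ≤ N → Even N → ∀ i ∈ idxs N,
        ‖Sh N (samples N f) i - deriv f (gridPt N i)‖ ≤
          c * hgrid N ^ ((s : ℝ) - 1 / 2) * sobolevNorm (s + 1) f) ∧
    (∀ ρ : ℝ → ℝ, IsFilter ρ →
      ∃ c : ℝ, 0 < c ∧ ∀ f : ℝ → ℂ, Function.Periodic f (2 * Real.pi) →
        ContDiff ℝ (s + 1 : ℕ) f →
        ∀ N : ℤ, 2 ≤ N → Even N → ∀ i ∈ idxs N,
          ‖Dh N ρ (samples N f) i - deriv f (gridPt N i)‖ ≤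
            c * hgrid N ^ ((s : ℝ) - 1 / 2) * sobolevNorm (s + 1) f) := by
  constructor
  · obtain ⟨c, hc, h⟩ := pseudospectral_derivative_accuracy_general s hs
      (isFilterOfOrder_sharpCutoff s)
    refine ⟨c, hc, fun f hf hfs N hN hE i _ => ?_⟩
    rw [Sh_eq_Dh_sharpCutoff (by omega) hE]
    exact (h f hf hfs.continuous (hasFiniteSobolevNorm_of_contDiff hf hfs)).2 N hN hE i
  · intro ρ hρ
    obtain ⟨C, hC⟩ := hρ.exists_isFilterOfOrder s
    obtain ⟨c, hc, h⟩ := pseudospectral_derivative_accuracy_general s hs hC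
    exact ⟨c, hc, fun f hf hfs N hN hE i _ =>
      (h f hf hfs.continuous (hasFiniteSobolevNorm_of_contDiff hf hfs)).2 N hN hE i⟩

end
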